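/- Let n ≥ 1, let 2 < p < ∞, and let x, y be Hermitian n×n complex matrices. Then ‖x+y‖_p² + ‖x−y‖_p² ≤ 2‖x‖_p² + 2(p−1)‖y‖_p², where for a Hermitian matrix a, ‖a‖_p := (∑_{i=1}^n |λ_i(a)|^p)^{1/p} and λ_1(a), …, λ_n(a) are the eigenvalues of a counted with multiplicity. -/

import Mathlib

open scoped BigOperators

/-- The Schatten `p`-norm of a Hermitian matrix `a`, defined through its eigenvalues:
`‖a‖_p = (∑ i, |λ_i(a)|^p)^{1/p}` (junk value `0` on non-Hermitian matrices). -/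
noncomputable def hermitianSchattenNorm {n : ℕ} (p : ℝ) (a : Matrix (Fin n) (Fin n) ℂ) : ℝ :=
  if ha : a.IsHermitian then (∑ i, |ha.eigenvalues i| ^ p) ^ (1 / p) else 0

/-!
Let `N t = ‖x + t y‖_p`. Expand `Tr |·| ^ p` to second order between two symmetric operators `a`
and `b`, using the eigenvectors `e i` of `a` and `f j` of `b` with eigenvalues `l i` and `m j`. The
second-order term at parameter `t` of the segment is the sum over `i, j` of
`p (p - 1) |(1 - t) l i + t m j| ^ (p - 2) |⟪e i, (b - a) f j⟫| ^ 2`, and Hölder's inequality bounds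
it by `p (p - 1) max (‖a‖_p) (‖b‖_p) ^ (p - 2) ‖b - a‖_p ^ 2`: for `p ≥ 3` because
`s ↦ s ^ (p - 2)` is convex, for `p ≤ 3` because it is operator concave. Hence, for every
`K > (p - 1) ‖y‖_p ^ 2`, the function `t ↦ N t ^ 2 - K t ^ 2` stays strictly below some line through
each point of its graph, locally around that point, so it is concave. Midpoint concavity on
`{-1, 0, 1}` and `K → (p - 1) ‖y‖_p ^ 2` give the inequality.
-/

section RealAnalysis

lemma hasDerivAt_abs_rpow_mul_self {q : ℝ} (hq : 0 < q) (t : ℝ) :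
    HasDerivAt (fun t : ℝ => |t| ^ q * t) ((q + 1) * |t| ^ q) t := by
  have away_from_zero : ∀ t : ℝ, t ≠ 0 →
      HasDerivAt (fun t : ℝ => |t| ^ q * t) ((q + 1) * |t| ^ q) t := by
    intro t ht
    have hderiv := ((hasDerivAt_abs ht).rpow_const (p := q) (.inl (abs_ne_zero.mpr ht))).mul
      (hasDerivAt_id t)
    refine hderiv.congr_deriv ?_
    have hsign : (SignType.sign t : ℝ) * t = |t| := sign_mul_self t
    have hpow : |t| ^ (q - 1) * |t| = |t| ^ q := by
      rw [← Real.rpow_add_one (abs_ne_zero.mpr ht), sub_add_cancel]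
    simp only [id_eq]
    linear_combination q * |t| ^ (q - 1) * hsign + q * hpow
  have hcont : Continuous fun t : ℝ => |t| ^ q :=
    continuous_abs.rpow_const fun _ => .inr hq.le
  rcases eq_or_ne t 0 with rfl | ht
  · exact hasDerivAt_of_hasDerivAt_of_ne away_from_zero (hcont.mul continuous_id).continuousAt
      (hcont.const_mul (q + 1)).continuousAt
  · exact away_from_zero t ht

lemma le_add_of_hasDerivAt_of_deriv_le {H H' H'' : ℝ → ℝ} {C : ℝ}
    (hH : ∀ s, HasDerivAt H (H' s) s) (hH' : ∀ s, HasDerivAt H' (H'' s) s)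
    (hC : ∀ s ∈ Set.Icc (0 : ℝ) 1, H'' s ≤ C) : H 1 ≤ H 0 + H' 0 + C / 2 := by
  have hG : ∀ s, HasDerivAt (fun s => H s - C / 2 * s ^ 2) (H' s - C * s) s := fun s =>
    ((hH s).sub ((hasDerivAt_pow 2 s).const_mul (C / 2))).congr_deriv (by ring)
  have hG' : ∀ s, HasDerivAt (fun s => H' s - C * s) (H'' s - C) s := fun s =>
    ((hH' s).sub ((hasDerivAt_id s).const_mul C)).congr_deriv (by ring)
  have hconcave : ConcaveOn ℝ (Set.Icc 0 1) fun s => H s - C / 2 * s ^ 2 :=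
    concaveOn_of_hasDerivWithinAt2_nonpos (convex_Icc 0 1)
      (fun s _ => (hG s).continuousAt.continuousWithinAt) (fun s _ => (hG s).hasDerivWithinAt)
      (fun s _ => (hG' s).hasDerivWithinAt)
      (fun s hs => sub_nonpos.mpr (hC s (interior_subset hs)))
  have hslope := hconcave.slope_le_of_hasDerivAt (by simp) (by simp) one_pos (hG 0)
  simp only [slope_def_field] at hslope
  linarith

lemma sum_mul_abs_add_rpow_le {ι : Type*} {s : Finset ι} {w l d : ι → ℝ} {p C : ℝ} (hp : 2 < p)
    (hC : ∀ t ∈ Set.Icc (0 : ℝ) 1, ∑ i ∈ s, w i * (|l i + t * d i| ^ (p - 2) * d i ^ 2) ≤ C) :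
    ∑ i ∈ s, w i * |l i + d i| ^ p ≤ ∑ i ∈ s, w i * |l i| ^ p
      + p * ∑ i ∈ s, w i * (|l i| ^ (p - 2) * l i * d i) + p * (p - 1) / 2 * C := by
  have hline : ∀ i t, HasDerivAt (fun t => l i + t * d i) (d i) t := fun i t => by
    simpa using ((hasDerivAt_id t).mul_const (d i)).const_add (l i)
  have htaylor := le_add_of_hasDerivAt_of_deriv_le
    (H := fun t => ∑ i ∈ s, w i * |l i + t * d i| ^ p)
    (H' := fun t => p * ∑ i ∈ s, w i * (|l i + t * d i| ^ (p - 2) * (l i + t * d i) * d i))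
    (H'' := fun t => p * ((p - 1) * ∑ i ∈ s, w i * (|l i + t * d i| ^ (p - 2) * d i ^ 2)))
    (C := p * ((p - 1) * C))
    (fun t => by
      rw [Finset.mul_sum]
      refine HasDerivAt.fun_sum fun i _ => ?_
      exact (((hasDerivAt_abs_rpow _ (by linarith)).comp t (hline i t)).const_mul
        (w i)).congr_deriv (by ring))
    (fun t => by
      rw [Finset.mul_sum]
      refine (HasDerivAt.fun_sum fun i _ => ?_).const_mul p
      exact ((((hasDerivAt_abs_rpow_mul_self (by linarith) _).comp t (hline i t)).mul_const
        (d i)).const_mul (w i)).congr_deriv (by ring))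
    (fun t ht => by
      have := hC t ht
      gcongr
      linarith)
  simp only [one_mul, zero_mul, add_zero] at htaylor
  linarith

lemma concaveOn_of_forall_eventually_lt_line {f : ℝ → ℝ} (hf : Continuous f)
    (hline : ∀ t₀, ∃ c, ∀ᶠ t in nhdsWithin t₀ {t₀}ᶜ, f t < f t₀ + c * (t - t₀)) :
    ConcaveOn ℝ Set.univ f := by
  refine LinearOrder.concaveOn_of_lt convex_univ fun x _ y _ hxy a b ha hb hab => ?_
  set k := (f y - f x) / (y - x) with hk
  have hky : k * (y - x) = f y - f x := div_mul_cancel₀ _ (sub_ne_zero.mpr hxy.ne')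
  obtain ⟨t₀, ht₀, hmin⟩ := isCompact_Icc.exists_isMinOn (Set.nonempty_Icc.mpr hxy.le)
    (f := fun t => f t - k * (t - x)) (by fun_prop)
  have not_interior : t₀ ∉ Set.Ioo x y := by
    intro hint
    obtain ⟨c, hc⟩ := hline t₀
    have hlt : ∀ᶠ t in nhdsWithin t₀ {t₀}ᶜ, 0 < (c - k) * (t - t₀) := by
      filter_upwards [hc, nhdsWithin_le_nhds (Ioo_mem_nhds hint.1 hint.2)] with t ht htxy
      have := isMinOn_iff.mp hmin t (Set.Ioo_subset_Icc_self htxy)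
      linarith
    obtain ⟨t, ht, htlt⟩ :=
      ((hlt.filter_mono (nhdsGT_le_nhdsNE t₀)).and self_mem_nhdsWithin).exists
    obtain ⟨u, hu, hult⟩ :=
      ((hlt.filter_mono (nhdsLT_le_nhdsNE t₀)).and self_mem_nhdsWithin).exists
    nlinarith
  have hmin_value : f t₀ - k * (t₀ - x) = f x := by
    rcases Set.eq_endpoints_or_mem_Ioo_of_mem_Icc ht₀ with rfl | rfl | hint
    · ring
    · linarith
    · exact absurd hint not_interior
  have hmem : a • x + b • y ∈ Set.Icc x y :=
    convex_Icc x y (Set.left_mem_Icc.mpr hxy.le) (Set.right_mem_Icc.mpr hxy.le) ha.le hb.le hab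
  have hchord := isMinOn_iff.mp hmin _ hmem
  rw [hmin_value] at hchord
  simp only [smul_eq_mul] at hchord ⊢
  obtain rfl : a = 1 - b := by linarith
  linear_combination hchord - b * hky

lemma sq_le_add_mul_rpow_sub_rpow {p a b : ℝ} (hp : 2 ≤ p) (ha : 0 ≤ a) (hb : 0 < b) :
    a ^ 2 ≤ b ^ 2 + 2 / p * b ^ (2 - p) * (a ^ p - b ^ p) := by
  have hp0 : 0 < p := by linarith
  have hratio : (a / b) ^ 2 ≤ 1 + 2 / p * (a ^ p / b ^ p - 1) := by
    have bernoulli := rpow_one_add_le_one_add_mul_self (s := (a / b) ^ p - 1) (p := 2 / p)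
      (by linarith [Real.rpow_nonneg (div_nonneg ha hb.le) p]) (by positivity)
      (by rwa [div_le_one hp0])
    rwa [add_sub_cancel, ← Real.rpow_mul (div_nonneg ha hb.le), mul_div_cancel₀ _ hp0.ne',
      Real.rpow_two, Real.div_rpow ha hb.le] at bernoulli
  have hbp : b ^ (2 - p) * b ^ p = b ^ 2 := by
    rw [← Real.rpow_add hb, sub_add_cancel, Real.rpow_two]
  calc a ^ 2 = (a / b) ^ 2 * b ^ 2 := by field_simp
    _ ≤ (1 + 2 / p * (a ^ p / b ^ p - 1)) * b ^ 2 := by gcongr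
    _ = b ^ 2 + 2 / p * b ^ (2 - p) * (a ^ p - b ^ p) := by
      rw [← hbp]
      field_simp

lemma sq_le_of_rpow_le_expansion {p a b h P Y : ℝ} (hp : 2 ≤ p) (ha : 0 ≤ a) (hb : 0 < b)
    (hab : a ^ p ≤ b ^ p + h * P + p * (p - 1) / 2 * (h ^ 2 * (max b a ^ (p - 2) * Y ^ 2))) :
    a ^ 2 ≤ b ^ 2 + 2 / p * b ^ (2 - p) * P * h
      + (p - 1) * Y ^ 2 * (max b a / b) ^ (p - 2) * h ^ 2 := by
  have hratio : b ^ (2 - p) * max b a ^ (p - 2) = (max b a / b) ^ (p - 2) := by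
    rw [Real.div_rpow (le_max_of_le_left hb.le) hb.le, ← neg_sub p 2, Real.rpow_neg hb.le,
      inv_mul_eq_div]
  calc a ^ 2 ≤ b ^ 2 + 2 / p * b ^ (2 - p) * (a ^ p - b ^ p) :=
        sq_le_add_mul_rpow_sub_rpow hp ha hb
    _ ≤ b ^ 2 + 2 / p * b ^ (2 - p)
          * (h * P + p * (p - 1) / 2 * (h ^ 2 * (max b a ^ (p - 2) * Y ^ 2))) := by
      gcongr
      linarith
    _ = _ := by
      rw [← hratio]
      field_simp
      ring

lemma exists_eventually_sq_lt_line {N : ℝ → ℝ} {p Y K t₀ P : ℝ} (hp : 2 ≤ p)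
    (hN : ∀ t, 0 ≤ N t) (hcont : Continuous N) (hlip : ∀ t, N t ≤ N t₀ + Y * |t - t₀|)
    (hexp : ∀ t, N t ^ p ≤ N t₀ ^ p + (t - t₀) * P
      + p * (p - 1) / 2 * ((t - t₀) ^ 2 * (max (N t₀) (N t) ^ (p - 2) * Y ^ 2)))
    (hK : (p - 1) * Y ^ 2 < K) :
    ∃ c, ∀ᶠ t in nhdsWithin t₀ {t₀}ᶜ, N t ^ 2 < N t₀ ^ 2 + c * (t - t₀) + K * (t - t₀) ^ 2 := by
  rcases (hN t₀).eq_or_lt with hzero | hpos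
  · refine ⟨0, ?_⟩
    filter_upwards [self_mem_nhdsWithin] with t ht
    have hsq : 0 < (t - t₀) ^ 2 := by
      have := sub_ne_zero.mpr ht
      positivity
    have hYK : Y ^ 2 < K := by nlinarith [sq_nonneg Y]
    calc N t ^ 2 ≤ (Y * |t - t₀|) ^ 2 := by
          have := hlip t
          rw [← hzero, zero_add] at this
          exact pow_le_pow_left₀ (hN t) this 2
      _ = Y ^ 2 * (t - t₀) ^ 2 := by rw [mul_pow, sq_abs]
      _ < K * (t - t₀) ^ 2 := by gcongr
      _ = _ := by rw [← hzero]; ring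
  · refine ⟨2 / p * N t₀ ^ (2 - p) * P, ?_⟩
    have hcoeff : ContinuousAt
        (fun t => (p - 1) * Y ^ 2 * (max (N t₀) (N t) / N t₀) ^ (p - 2)) t₀ := by
      refine continuousAt_const.mul (ContinuousAt.rpow_const ?_ (.inr (by linarith)))
      exact ((continuous_const.max hcont).div_const _).continuousAt
    have hlt : ∀ᶠ t in nhds t₀, (p - 1) * Y ^ 2 * (max (N t₀) (N t) / N t₀) ^ (p - 2) < K := by
      refine hcoeff.eventually_lt continuousAt_const ?_
      simpa only [max_self, div_self hpos.ne', Real.one_rpow, mul_one] using hK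
    filter_upwards [nhdsWithin_le_nhds hlt, self_mem_nhdsWithin] with t ht hne
    have hsq : 0 < (t - t₀) ^ 2 := by
      have := sub_ne_zero.mpr hne
      positivity
    have hstep := sq_le_of_rpow_le_expansion hp (hN t) hpos (hexp t)
    have := mul_lt_mul_of_pos_right ht hsq
    linarith

lemma sq_add_sq_le_of_rpow_le_expansion {N : ℝ → ℝ} {p Y : ℝ} (hp : 2 ≤ p) (hN : ∀ t, 0 ≤ N t)
    (hY : 0 ≤ Y) (hlip : ∀ t t₀, N t ≤ N t₀ + Y * |t - t₀|)
    (hexp : ∀ t₀, ∃ P, ∀ t, N t ^ p ≤ N t₀ ^ p + (t - t₀) * P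
      + p * (p - 1) / 2 * ((t - t₀) ^ 2 * (max (N t₀) (N t) ^ (p - 2) * Y ^ 2))) :
    N 1 ^ 2 + N (-1) ^ 2 ≤ 2 * N 0 ^ 2 + 2 * (p - 1) * Y ^ 2 := by
  have hcont : Continuous N := (LipschitzWith.of_le_add_mul ⟨Y, hY⟩ hlip).continuous
  have parabola_bound : ∀ K, (p - 1) * Y ^ 2 < K →
      (N 1 ^ 2 + N (-1) ^ 2) / 2 - N 0 ^ 2 ≤ K := by
    intro K hK
    have hconcave : ConcaveOn ℝ Set.univ fun t => N t ^ 2 - K * t ^ 2 := by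
      refine concaveOn_of_forall_eventually_lt_line (by fun_prop) fun t₀ => ?_
      obtain ⟨P, hP⟩ := hexp t₀
      obtain ⟨c, hc⟩ :=
        exists_eventually_sq_lt_line hp hN hcont (fun t => hlip t t₀) hP hK
      refine ⟨c - 2 * K * t₀, hc.mono fun t ht => ?_⟩
      linear_combination ht
    have hmid := hconcave.2 (Set.mem_univ 1) (Set.mem_univ (-1))
      (show (0 : ℝ) ≤ 1 / 2 by norm_num) (show (0 : ℝ) ≤ 1 / 2 by norm_num) (by norm_num)
    norm_num at hmid
    linarith
  linarith [le_of_forall_gt_imp_ge_of_dense parabola_bound]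

end RealAnalysis

section FiniteSums

variable {ι κ : Type*} [Fintype ι] [Fintype κ]

lemma sum_abs_sum_mul_rpow_le {W : ι → κ → ℝ} (hW : ∀ i k, 0 ≤ W i k)
    (hrow : ∀ i, ∑ k, W i k = 1) (hcol : ∀ k, ∑ i, W i k = 1) (l : ι → ℝ) {p : ℝ} (hp : 1 ≤ p) :
    ∑ k, |∑ i, W i k * l i| ^ p ≤ ∑ i, |l i| ^ p := by
  calc ∑ k, |∑ i, W i k * l i| ^ p ≤ ∑ k, (∑ i, W i k * |l i|) ^ p := by
        gcongr with k
        refine (Finset.abs_sum_le_sum_abs _ _).trans_eq (Finset.sum_congr rfl fun i _ => ?_)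
        rw [abs_mul, abs_of_nonneg (hW i k)]
    _ ≤ ∑ k, ∑ i, W i k * |l i| ^ p :=
        Finset.sum_le_sum fun k _ => Real.rpow_arith_mean_le_arith_mean_rpow _ _ _
          (fun i _ => hW i k) (hcol k) (fun i _ => abs_nonneg _) hp
    _ = ∑ i, |l i| ^ p := by
        rw [Finset.sum_comm]
        simp only [← Finset.sum_mul, hrow, one_mul]

lemma sq_rpow_half (x p : ℝ) : (x ^ 2) ^ (p / 2) = |x| ^ p := by
  rw [← sq_abs, ← Real.rpow_natCast_mul (abs_nonneg _), Nat.cast_two,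
    mul_div_cancel₀ _ two_ne_zero]

lemma sum_rpow_mul_le_of_sum_rpow_le {f g : ι → ℝ} {p M Y : ℝ} (hp : 2 < p) (hM : 0 ≤ M)
    (hY : 0 ≤ Y) (hf : ∀ i, 0 ≤ f i) (hg : ∀ i, 0 ≤ g i) (hfM : ∑ i, f i ^ p ≤ M ^ p)
    (hgY : ∑ i, g i ^ (p / 2) ≤ Y ^ p) :
    ∑ i, f i ^ (p - 2) * g i ≤ M ^ (p - 2) * Y ^ 2 := by
  have hp2 : 0 < p - 2 := by linarith
  have hp0 : 0 < p := by linarith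
  have hconj : (p / (p - 2)).HolderConjugate (p / 2) := by
    rw [Real.holderConjugate_iff, one_lt_div hp2]
    refine ⟨by linarith, ?_⟩
    field_simp
    ring
  have hfpow : ∀ i, (f i ^ (p - 2)) ^ (p / (p - 2)) = f i ^ p := fun i => by
    rw [← Real.rpow_mul (hf i), mul_div_cancel₀ _ hp2.ne']
  calc ∑ i, f i ^ (p - 2) * g i
      ≤ (∑ i, (f i ^ (p - 2)) ^ (p / (p - 2))) ^ (1 / (p / (p - 2)))
        * (∑ i, g i ^ (p / 2)) ^ (1 / (p / 2)) :=
        Real.inner_le_Lp_mul_Lq_of_nonneg _ hconj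
          (fun i _ => Real.rpow_nonneg (hf i) _) (fun i _ => hg i)
    _ ≤ (M ^ p) ^ (1 / (p / (p - 2))) * (Y ^ p) ^ (1 / (p / 2)) := by
        simp only [hfpow]
        have := Finset.sum_nonneg fun i (_ : i ∈ Finset.univ) => Real.rpow_nonneg (hf i) p
        have := Finset.sum_nonneg fun i (_ : i ∈ Finset.univ) => Real.rpow_nonneg (hg i) (p / 2)
        gcongr
    _ = M ^ (p - 2) * Y ^ 2 := by
        rw [← Real.rpow_mul hM, ← Real.rpow_mul hY, ← Real.rpow_two, one_div_div, one_div_div,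
          mul_div_cancel₀ _ hp0.ne', mul_div_cancel₀ _ hp0.ne']

end FiniteSums

section Compression

variable {ι κ : Type*} [Fintype ι] [Fintype κ]

/- By the Löwner representation, `x ↦ x ^ r` is a positive superposition of the functions
`x ↦ u⁻¹ - (u + x)⁻¹`. -/
lemma sum_rpow_mul_le_of_sum_inv_add_mul_le {α x : ι → ℝ} {β z : κ → ℝ} {r : ℝ}
    (hr : r ∈ Set.Ioo (0 : ℝ) 1) (hx : ∀ i, 0 ≤ x i) (hz : ∀ k, 0 ≤ z k)
    (hsum : ∑ i, α i = ∑ k, β k)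
    (hinv : ∀ u > 0, ∑ k, (u + z k)⁻¹ * β k ≤ ∑ i, (u + x i)⁻¹ * α i) :
    ∑ i, x i ^ r * α i ≤ ∑ k, z k ^ r * β k := by
  obtain ⟨μ, hμ⟩ := Real.exists_measure_rpow_eq_integral_rpowIntegrand₀₁ hr
  have integrable_term : ∀ a b : ℝ, 0 ≤ a → MeasureTheory.IntegrableOn
      (fun u => Real.rpowIntegrand₀₁ r u a * b) (Set.Ioi 0) μ :=
    fun a b ha => (hμ a ha).1.mul_const b
  have rpow_mul_eq_integral : ∀ a b : ℝ, 0 ≤ a →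
      a ^ r * b = ∫ u in Set.Ioi 0, Real.rpowIntegrand₀₁ r u a * b ∂μ := fun a b ha => by
    rw [MeasureTheory.integral_mul_const, ← (hμ a ha).2]
  simp only [rpow_mul_eq_integral _ _ (hx _), rpow_mul_eq_integral _ _ (hz _)]
  rw [← MeasureTheory.integral_finsetSum _ fun i _ => integrable_term _ _ (hx i),
    ← MeasureTheory.integral_finsetSum _ fun k _ => integrable_term _ _ (hz k)]
  refine MeasureTheory.setIntegral_mono_on
    (MeasureTheory.integrable_finsetSum _ fun i _ => integrable_term _ _ (hx i))
    (MeasureTheory.integrable_finsetSum _ fun k _ => integrable_term _ _ (hz k))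
    measurableSet_Ioi fun u hu => ?_
  have hur : 0 ≤ u ^ r := Real.rpow_nonneg (le_of_lt hu) r
  simp only [Real.rpowIntegrand₀₁, mul_assoc, sub_mul, ← Finset.mul_sum, Finset.sum_sub_distrib,
    hsum]
  gcongr
  exact hinv u hu

variable {𝕜 : Type*} [RCLike 𝕜]

open Matrix

lemma sum_mul_star_mulVec_mul_mulVec [DecidableEq ι] [DecidableEq κ] {V : Matrix ι κ 𝕜}
    {c : ι → ℝ} {d : κ → ℝ}
    (hV : Vᴴ * diagonal (fun i => (c i : 𝕜)) * V = diagonal fun k => (d k : 𝕜)) (v w : κ → 𝕜) :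
    ∑ i, (c i : 𝕜) * (star ((V *ᵥ w) i) * (V *ᵥ v) i) = ∑ k, (d k : 𝕜) * (star (w k) * v k) := by
  calc ∑ i, (c i : 𝕜) * (star ((V *ᵥ w) i) * (V *ᵥ v) i)
      = star (V *ᵥ w) ⬝ᵥ (diagonal (fun i => (c i : 𝕜)) *ᵥ (V *ᵥ v)) := by
        simp only [dotProduct, mulVec_diagonal, Pi.star_apply, mul_left_comm]
    _ = star w ⬝ᵥ (diagonal (fun k => (d k : 𝕜)) *ᵥ v) := by
        rw [← hV, star_mulVec, ← dotProduct_mulVec, mulVec_mulVec, mulVec_mulVec, Matrix.mul_assoc]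
    _ = _ := by simp only [dotProduct, mulVec_diagonal, Pi.star_apply, mul_left_comm]

lemma sum_mul_norm_sq_mulVec [DecidableEq ι] [DecidableEq κ] {V : Matrix ι κ 𝕜} {c : ι → ℝ}
    {d : κ → ℝ}
    (hV : Vᴴ * diagonal (fun i => (c i : 𝕜)) * V = diagonal fun k => (d k : 𝕜)) (v : κ → 𝕜) :
    ∑ i, c i * ‖(V *ᵥ v) i‖ ^ 2 = ∑ k, d k * ‖v k‖ ^ 2 := by
  have := sum_mul_star_mulVec_mul_mulVec hV v v
  simp only [RCLike.star_def, RCLike.conj_mul] at this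
  exact_mod_cast this

lemma two_mul_re_star_mul_sub_le {c : ℝ} (hc : 0 < c) (y w : 𝕜) :
    2 * RCLike.re (star w * y) - c * ‖w‖ ^ 2 ≤ c⁻¹ * ‖y‖ ^ 2 := by
  have hsquare : 0 ≤ c⁻¹ * ‖y - c * w‖ ^ 2 := by positivity
  have hexpand : ‖y - c * w‖ ^ 2
      = ‖y‖ ^ 2 - 2 * c * RCLike.re (star w * y) + c ^ 2 * ‖w‖ ^ 2 := by
    simp only [← RCLike.normSq_eq_def', RCLike.normSq_apply, map_sub, RCLike.mul_re,
      RCLike.mul_im, RCLike.ofReal_re, RCLike.ofReal_im, RCLike.star_def, RCLike.conj_re,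
      RCLike.conj_im]
    ring
  rw [hexpand] at hsquare
  field_simp at hsquare ⊢
  linarith

/- `⟪y, T⁻¹ y⟫` is the maximum over `w` of `2 re ⟪w, y⟫ - ⟪w, T w⟫`; taking the maximum over the
range of `V` only decreases it. -/
lemma sum_inv_mul_norm_sq_le_of_compression [DecidableEq ι] [DecidableEq κ] {V : Matrix ι κ 𝕜}
    {c : ι → ℝ} {d : κ → ℝ} (hc : ∀ i, 0 < c i) (hV : Vᴴ * V = 1)
    (hVd : Vᴴ * diagonal (fun i => (c i : 𝕜)) * V = diagonal fun k => (d k : 𝕜)) (v : κ → 𝕜) :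
    ∑ k, (d k)⁻¹ * ‖v k‖ ^ 2 ≤ ∑ i, (c i)⁻¹ * ‖(V *ᵥ v) i‖ ^ 2 := by
  set w : κ → 𝕜 := fun k => ((d k)⁻¹ : ℝ) * v k with hw
  have cross : ∑ i, RCLike.re (star ((V *ᵥ w) i) * (V *ᵥ v) i) = ∑ k, (d k)⁻¹ * ‖v k‖ ^ 2 := by
    have := sum_mul_star_mulVec_mul_mulVec (c := 1) (d := 1) (by simpa using hV) v w
    simp only [Pi.one_apply, RCLike.ofReal_one, one_mul] at this
    rw [← map_sum, this, map_sum]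
    refine Finset.sum_congr rfl fun k _ => ?_
    rw [hw, star_mul', RCLike.star_def, RCLike.conj_ofReal, mul_assoc,
      RCLike.conj_mul]
    norm_cast
  have energy : ∑ i, c i * ‖(V *ᵥ w) i‖ ^ 2 = ∑ k, (d k)⁻¹ * ‖v k‖ ^ 2 := by
    rw [sum_mul_norm_sq_mulVec hVd]
    refine Finset.sum_congr rfl fun k _ => ?_
    rw [hw, norm_mul, RCLike.norm_ofReal, mul_pow, sq_abs]
    rcases eq_or_ne (d k) 0 with hd | hd
    · simp [hd]
    · field_simp
  calc ∑ k, (d k)⁻¹ * ‖v k‖ ^ 2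
      = ∑ i, (2 * RCLike.re (star ((V *ᵥ w) i) * (V *ᵥ v) i) - c i * ‖(V *ᵥ w) i‖ ^ 2) := by
        rw [Finset.sum_sub_distrib, ← Finset.mul_sum, cross, energy]
        ring
    _ ≤ _ := Finset.sum_le_sum fun i _ => two_mul_re_star_mul_sub_le (hc i) _ _

lemma diagonal_ofReal_const_add {σ : Type*} [DecidableEq σ] (u : ℝ) (c : σ → ℝ) :
    diagonal (fun i => ((u + c i : ℝ) : 𝕜)) = (u : 𝕜) • 1 + diagonal fun i => (c i : 𝕜) := by
  simp only [RCLike.ofReal_add, smul_one_eq_diagonal, diagonal_add]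

lemma sum_rpow_mul_norm_sq_le_of_compression [DecidableEq ι] [DecidableEq κ] {V : Matrix ι κ 𝕜}
    {c : ι → ℝ} {d : κ → ℝ} {r : ℝ} (hr : r ∈ Set.Icc (0 : ℝ) 1) (hc : ∀ i, 0 ≤ c i)
    (hV : Vᴴ * V = 1)
    (hVd : Vᴴ * diagonal (fun i => (c i : 𝕜)) * V = diagonal fun k => (d k : 𝕜)) (v : κ → 𝕜) :
    ∑ i, c i ^ r * ‖(V *ᵥ v) i‖ ^ 2 ≤ ∑ k, d k ^ r * ‖v k‖ ^ 2 := by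
  have isometry : ∑ i, ‖(V *ᵥ v) i‖ ^ 2 = ∑ k, ‖v k‖ ^ 2 := by
    simpa using sum_mul_norm_sq_mulVec (c := 1) (d := 1) (by simpa using hV) v
  rcases hr.1.eq_or_lt with rfl | hr0
  · simpa using isometry.le
  rcases hr.2.eq_or_lt with rfl | hr1
  · simpa using (sum_mul_norm_sq_mulVec hVd v).le
  have hd : ∀ k, 0 ≤ d k := fun k => by
    have := sum_mul_norm_sq_mulVec hVd (Pi.single k 1)
    simp only [Pi.single_apply, apply_ite norm, norm_one, norm_zero, ite_pow, one_pow, ne_eq,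
      OfNat.ofNat_ne_zero, not_false_eq_true, zero_pow, mul_ite, mul_one, mul_zero,
      Finset.sum_ite_eq', Finset.mem_univ, if_true] at this
    rw [← this]
    exact Finset.sum_nonneg fun i _ => mul_nonneg (hc i) (sq_nonneg _)
  refine sum_rpow_mul_le_of_sum_inv_add_mul_le ⟨hr0, hr1⟩ hc hd isometry fun u hu => ?_
  refine sum_inv_mul_norm_sq_le_of_compression (fun i => by linarith [hc i]) hV ?_ v
  rw [diagonal_ofReal_const_add, diagonal_ofReal_const_add, Matrix.mul_add,
    Matrix.add_mul, hVd, Matrix.mul_smul, Matrix.smul_mul, Matrix.mul_one, hV]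

end Compression

section Operators

open scoped InnerProductSpace

variable {𝕜 E : Type*} [RCLike 𝕜] [NormedAddCommGroup E] [InnerProductSpace 𝕜 E]
variable {ι κ σ : Type*} [Fintype ι] [Fintype κ] [Fintype σ]

section Diagonalization

lemma sum_norm_inner_sq_left (e : OrthonormalBasis ι 𝕜 E) (f : OrthonormalBasis κ 𝕜 E) (k : κ) :
    ∑ i, ‖⟪e i, f k⟫_𝕜‖ ^ 2 = 1 := by
  rw [e.sum_sq_norm_inner_right, f.norm_eq_one, one_pow]

lemma sum_norm_inner_sq_right (e : OrthonormalBasis ι 𝕜 E) (f : OrthonormalBasis κ 𝕜 E) (i : ι) :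
    ∑ k, ‖⟪e i, f k⟫_𝕜‖ ^ 2 = 1 := by
  rw [f.sum_sq_norm_inner_left, e.norm_eq_one, one_pow]

/-- `T` is diagonal in the orthonormal basis `e`, with real eigenvalues `l` listed with
multiplicity in an arbitrary order. -/
def IsDiagonalizedBy (T : E →ₗ[𝕜] E) (e : OrthonormalBasis ι 𝕜 E) (l : ι → ℝ) : Prop :=
  ∀ i, T (e i) = (l i : 𝕜) • e i

namespace IsDiagonalizedBy

variable {T : E →ₗ[𝕜] E} {e : OrthonormalBasis ι 𝕜 E} {l : ι → ℝ}

lemma inner_apply (h : IsDiagonalizedBy T e l) (i : ι) (v : E) :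
    ⟪e i, T v⟫_𝕜 = l i * ⟪e i, v⟫_𝕜 := by
  classical
  conv_lhs => rw [← e.sum_repr' v]
  simp only [map_sum, map_smul, h _, inner_sum, inner_smul_right, e.inner_eq_ite, mul_ite, mul_one,
    mul_zero, Finset.sum_ite_eq, Finset.mem_univ, if_true]
  exact mul_comm _ _

lemma isSymmetric (h : IsDiagonalizedBy T e l) : T.IsSymmetric := fun v w => by
  rw [← e.sum_inner_mul_inner v, ← e.sum_inner_mul_inner (T v)]
  refine Finset.sum_congr rfl fun i _ => ?_
  rw [← inner_conj_symm (T v), h.inner_apply, h.inner_apply, map_mul, RCLike.conj_ofReal,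
    inner_conj_symm]
  ring

lemma smul (h : IsDiagonalizedBy T e l) (t : ℝ) :
    IsDiagonalizedBy ((t : 𝕜) • T) e fun i => t * l i := fun i => by
  rw [LinearMap.smul_apply, h i, smul_smul, RCLike.ofReal_mul]

lemma re_inner_basis (h : IsDiagonalizedBy T e l) (i : ι) : RCLike.re ⟪e i, T (e i)⟫_𝕜 = l i := by
  rw [h.inner_apply, inner_self_eq_norm_sq_to_K, e.norm_eq_one, RCLike.ofReal_one, one_pow, mul_one,
    RCLike.ofReal_re]

lemma re_inner_self_apply (h : IsDiagonalizedBy T e l) (v : E) :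
    RCLike.re ⟪v, T v⟫_𝕜 = ∑ i, ‖⟪e i, v⟫_𝕜‖ ^ 2 * l i := by
  rw [← e.sum_inner_mul_inner, map_sum]
  refine Finset.sum_congr rfl fun i _ => ?_
  rw [h.inner_apply, mul_left_comm, ← inner_conj_symm v, RCLike.conj_mul]
  norm_cast
  exact mul_comm _ _

lemma norm_apply_sq (h : IsDiagonalizedBy T e l) (v : E) :
    ‖T v‖ ^ 2 = ∑ i, ‖⟪e i, v⟫_𝕜‖ ^ 2 * l i ^ 2 := by
  rw [← e.sum_sq_norm_inner_right]
  refine Finset.sum_congr rfl fun i _ => ?_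
  rw [h.inner_apply, norm_mul, RCLike.norm_ofReal, mul_pow, sq_abs, mul_comm]

lemma sum_abs_re_inner_rpow_le (h : IsDiagonalizedBy T e l) (f : OrthonormalBasis κ 𝕜 E) {p : ℝ}
    (hp : 1 ≤ p) : ∑ k, |RCLike.re ⟪f k, T (f k)⟫_𝕜| ^ p ≤ ∑ i, |l i| ^ p := by
  simp only [h.re_inner_self_apply]
  exact sum_abs_sum_mul_rpow_le (fun _ _ => sq_nonneg _) (sum_norm_inner_sq_right e f)
    (sum_norm_inner_sq_left e f) l hp

lemma sum_abs_rpow_eq {f : OrthonormalBasis κ 𝕜 E} {m : κ → ℝ} {p : ℝ}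
    (he : IsDiagonalizedBy T e l) (hf : IsDiagonalizedBy T f m) (hp : 1 ≤ p) :
    ∑ i, |l i| ^ p = ∑ j, |m j| ^ p := by
  refine le_antisymm ?_ ?_
  · simpa only [he.re_inner_basis] using hf.sum_abs_re_inner_rpow_le e hp
  · simpa only [hf.re_inner_basis] using he.sum_abs_re_inner_rpow_le f hp

lemma sum_norm_apply_sq_rpow_le (h : IsDiagonalizedBy T e l) (f : OrthonormalBasis κ 𝕜 E) {p : ℝ}
    (hp : 2 ≤ p) : ∑ k, (‖T (f k)‖ ^ 2) ^ (p / 2) ≤ ∑ i, |l i| ^ p := by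
  calc ∑ k, (‖T (f k)‖ ^ 2) ^ (p / 2)
      = ∑ k, |∑ i, ‖⟪e i, f k⟫_𝕜‖ ^ 2 * l i ^ 2| ^ (p / 2) := by
        simp only [← h.norm_apply_sq, abs_pow, abs_norm]
    _ ≤ ∑ i, |l i ^ 2| ^ (p / 2) :=
        sum_abs_sum_mul_rpow_le (fun _ _ => sq_nonneg _) (sum_norm_inner_sq_right e f)
          (sum_norm_inner_sq_left e f) _ (by linarith)
    _ = ∑ i, |l i| ^ p := by simp only [abs_sq, sq_rpow_half]

end IsDiagonalizedBy

end Diagonalization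

section OverlapMatrix

variable (e : OrthonormalBasis ι 𝕜 E) (f : OrthonormalBasis κ 𝕜 E) (g : OrthonormalBasis σ 𝕜 E)

open Matrix

/-- The matrix sending `v` to the entries `⟪e i, T (f j)⟫_𝕜` of the operator `T` that is diagonal
in `g` with eigenvalues `v`. -/
noncomputable def overlapMatrix : Matrix (ι × κ) σ 𝕜 :=
  Matrix.of fun x k => ⟪e x.1, g k⟫_𝕜 * ⟪g k, f x.2⟫_𝕜

lemma overlapMatrix_mulVec {T : E →ₗ[𝕜] E} {g : OrthonormalBasis σ 𝕜 E} {s : σ → ℝ}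
    (h : IsDiagonalizedBy T g s) (x : ι × κ) :
    (overlapMatrix e f g *ᵥ fun k => (s k : 𝕜)) x = ⟪e x.1, T (f x.2)⟫_𝕜 := by
  rw [← g.sum_inner_mul_inner]
  simp only [overlapMatrix, mulVec, dotProduct, Matrix.of_apply, h.inner_apply, mul_assoc,
    mul_comm]

lemma conjTranspose_overlapMatrix_mul_diagonal_mul_apply [DecidableEq ι] [DecidableEq κ] (c : ι → 𝕜)
    (d : κ → 𝕜) (k k' : σ) :
    ((overlapMatrix e f g)ᴴ * diagonal (fun x : ι × κ => c x.1 * d x.2) * overlapMatrix e f g) k k'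
      = (∑ i, c i * (⟪g k, e i⟫_𝕜 * ⟪e i, g k'⟫_𝕜))
        * ∑ j, d j * (⟪g k', f j⟫_𝕜 * ⟪f j, g k⟫_𝕜) := by
  rw [Matrix.mul_apply, Fintype.sum_prod_type, Finset.sum_mul_sum]
  refine Finset.sum_congr rfl fun i _ => Finset.sum_congr rfl fun j _ => ?_
  simp only [mul_diagonal, conjTranspose_apply, overlapMatrix, Matrix.of_apply, star_mul',
    RCLike.star_def, inner_conj_symm]
  ring

lemma conjTranspose_overlapMatrix_mul_self [DecidableEq σ] :
    (overlapMatrix e f g)ᴴ * overlapMatrix e f g = 1 := by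
  classical
  ext k k'
  have := conjTranspose_overlapMatrix_mul_diagonal_mul_apply e f g 1 1 k k'
  simp only [Pi.one_apply, one_mul, diagonal_one, Matrix.mul_one,
    OrthonormalBasis.sum_inner_mul_inner, g.inner_eq_ite] at this
  rw [this]
  rcases eq_or_ne k k' with rfl | hk
  · simp only [if_true, mul_one, one_apply_eq]
  · simp only [hk, hk.symm, if_false, mul_zero, one_apply_ne, ne_eq, not_false_eq_true]

lemma conjTranspose_overlapMatrix_mul_diagonal_add_mul [DecidableEq ι] [DecidableEq κ]
    [DecidableEq σ] (c : ι → ℝ) (d : κ → ℝ) :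
    (overlapMatrix e f g)ᴴ * diagonal (fun x : ι × κ => ((c x.1 + d x.2 : ℝ) : 𝕜))
        * overlapMatrix e f g
      = diagonal fun k =>
        ((∑ i, ‖⟪e i, g k⟫_𝕜‖ ^ 2 * c i + ∑ j, ‖⟪f j, g k⟫_𝕜‖ ^ 2 * d j : ℝ) : 𝕜) := by
  have hsplit : diagonal (fun x : ι × κ => ((c x.1 + d x.2 : ℝ) : 𝕜))
      = diagonal (fun x => (c x.1 : 𝕜) * (1 : κ → 𝕜) x.2)
        + diagonal fun x => (1 : ι → 𝕜) x.1 * (d x.2 : 𝕜) := by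
    simp only [diagonal_add, Pi.one_apply, mul_one, one_mul, RCLike.ofReal_add]
  ext k k'
  rw [hsplit, Matrix.mul_add, Matrix.add_mul, Matrix.add_apply,
    conjTranspose_overlapMatrix_mul_diagonal_mul_apply (c := fun i => (c i : 𝕜)),
    conjTranspose_overlapMatrix_mul_diagonal_mul_apply (d := fun j => (d j : 𝕜))]
  simp only [Pi.one_apply, one_mul, OrthonormalBasis.sum_inner_mul_inner, g.inner_eq_ite]
  rcases eq_or_ne k k' with rfl | hk
  · have hnorm : ∀ v : E, ⟪g k, v⟫_𝕜 * ⟪v, g k⟫_𝕜 = (‖⟪v, g k⟫_𝕜‖ : 𝕜) ^ 2 := fun v => by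
      rw [← inner_conj_symm, RCLike.conj_mul]
    simp only [if_true, mul_one, one_mul, hnorm, diagonal_apply_eq]
    push_cast
    simp only [mul_comm]
  · simp only [hk, hk.symm, if_false, mul_zero, zero_mul, add_zero, diagonal_apply_ne, ne_eq,
      not_false_eq_true]

end OverlapMatrix

section KeyInequality

variable {e : OrthonormalBasis ι 𝕜 E} {f : OrthonormalBasis κ 𝕜 E} {g : OrthonormalBasis σ 𝕜 E}
variable {T : E →ₗ[𝕜] E} {l : ι → ℝ} {m : κ → ℝ} {s : σ → ℝ} {a b p M Y : ℝ}

lemma sum_rpow_mul_norm_apply_sq_le (hT : IsDiagonalizedBy T g s) (hp : 2 < p) (hM : 0 ≤ M)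
    (hY : 0 ≤ Y) (hl : ∀ i, 0 ≤ l i) (hlM : ∑ i, l i ^ p ≤ M ^ p) (hsY : ∑ k, |s k| ^ p ≤ Y ^ p) :
    ∑ i, l i ^ (p - 2) * ‖T (e i)‖ ^ 2 ≤ M ^ (p - 2) * Y ^ 2 :=
  sum_rpow_mul_le_of_sum_rpow_le hp hM hY hl (fun _ => sq_nonneg _) hlM
    ((hT.sum_norm_apply_sq_rpow_le e hp.le).trans hsY)

lemma sum_rpow_mul_norm_inner_sq_le_of_three_le (hT : IsDiagonalizedBy T g s) (hp : 3 ≤ p)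
    (hM : 0 ≤ M) (hY : 0 ≤ Y) (hl : ∀ i, 0 ≤ l i) (hm : ∀ j, 0 ≤ m j) (ha : 0 ≤ a) (hb : 0 ≤ b)
    (hab : a + b = 1) (hlM : ∑ i, l i ^ p ≤ M ^ p) (hmM : ∑ j, m j ^ p ≤ M ^ p)
    (hsY : ∑ k, |s k| ^ p ≤ Y ^ p) :
    ∑ i, ∑ j, (a * l i + b * m j) ^ (p - 2) * ‖⟪e i, T (f j)⟫_𝕜‖ ^ 2 ≤ M ^ (p - 2) * Y ^ 2 := by
  have hrow : ∀ i, ∑ j, ‖⟪e i, T (f j)⟫_𝕜‖ ^ 2 = ‖T (e i)‖ ^ 2 := fun i => by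
    simp only [← hT.isSymmetric (e i), f.sum_sq_norm_inner_left]
  calc ∑ i, ∑ j, (a * l i + b * m j) ^ (p - 2) * ‖⟪e i, T (f j)⟫_𝕜‖ ^ 2
      ≤ ∑ i, ∑ j, (a * l i ^ (p - 2) + b * m j ^ (p - 2)) * ‖⟪e i, T (f j)⟫_𝕜‖ ^ 2 := by
        gcongr with i _ j
        exact (convexOn_rpow (by linarith)).2 (hl i) (hm j) ha hb hab
    _ = a * ∑ i, l i ^ (p - 2) * ‖T (e i)‖ ^ 2 + b * ∑ j, m j ^ (p - 2) * ‖T (f j)‖ ^ 2 := by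
        simp only [add_mul, Finset.sum_add_distrib, mul_assoc, ← Finset.mul_sum, hrow]
        rw [Finset.sum_comm]
        simp only [← Finset.mul_sum, e.sum_sq_norm_inner_right]
    _ ≤ a * (M ^ (p - 2) * Y ^ 2) + b * (M ^ (p - 2) * Y ^ 2) := by
        gcongr
        · exact sum_rpow_mul_norm_apply_sq_le hT (by linarith) hM hY hl hlM hsY
        · exact sum_rpow_mul_norm_apply_sq_le hT (by linarith) hM hY hm hmM hsY
    _ = M ^ (p - 2) * Y ^ 2 := by rw [← add_mul, hab, one_mul]

lemma sum_convex_combination_rpow_le {x z : σ → ℝ} {C : ℝ} (hp : 1 ≤ p) (hx : ∀ k, 0 ≤ x k)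
    (hz : ∀ k, 0 ≤ z k) (ha : 0 ≤ a) (hb : 0 ≤ b) (hab : a + b = 1)
    (hxC : ∑ k, x k ^ p ≤ C) (hzC : ∑ k, z k ^ p ≤ C) :
    ∑ k, (a * x k + b * z k) ^ p ≤ C := by
  calc ∑ k, (a * x k + b * z k) ^ p
      ≤ ∑ k, (a * x k ^ p + b * z k ^ p) :=
        Finset.sum_le_sum fun k _ => (convexOn_rpow hp).2 (hx k) (hz k) ha hb hab
    _ = a * ∑ k, x k ^ p + b * ∑ k, z k ^ p := by
        rw [Finset.sum_add_distrib, Finset.mul_sum, Finset.mul_sum]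
    _ ≤ a * C + b * C := by gcongr
    _ = C := by rw [← add_mul, hab, one_mul]

lemma sum_overlap_rpow_le (hp : 1 ≤ p) (hl : ∀ i, 0 ≤ l i) :
    ∑ k, (∑ i, ‖⟪e i, g k⟫_𝕜‖ ^ 2 * l i) ^ p ≤ ∑ i, l i ^ p := by
  have := sum_abs_sum_mul_rpow_le (fun _ _ => sq_nonneg _) (sum_norm_inner_sq_right e g)
    (sum_norm_inner_sq_left e g) l hp
  simpa only [abs_of_nonneg (hl _),
    abs_of_nonneg (Finset.sum_nonneg fun i _ => mul_nonneg (sq_nonneg _) (hl i))] using this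

/- Here `x ↦ x ^ (p - 2)` is concave, and the operator form of Jensen's inequality replaces the
weights by their averages over the eigenbasis of `T`. -/
lemma sum_rpow_mul_norm_inner_sq_le_of_le_three (hT : IsDiagonalizedBy T g s) (hp : 2 < p)
    (hp' : p ≤ 3) (hM : 0 ≤ M) (hY : 0 ≤ Y) (hl : ∀ i, 0 ≤ l i) (hm : ∀ j, 0 ≤ m j) (ha : 0 ≤ a)
    (hb : 0 ≤ b) (hab : a + b = 1) (hlM : ∑ i, l i ^ p ≤ M ^ p) (hmM : ∑ j, m j ^ p ≤ M ^ p)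
    (hsY : ∑ k, |s k| ^ p ≤ Y ^ p) :
    ∑ i, ∑ j, (a * l i + b * m j) ^ (p - 2) * ‖⟪e i, T (f j)⟫_𝕜‖ ^ 2 ≤ M ^ (p - 2) * Y ^ 2 := by
  classical
  have hp1 : 1 ≤ p := by linarith
  have hA : ∀ k, 0 ≤ ∑ i, ‖⟪e i, g k⟫_𝕜‖ ^ 2 * l i := fun k =>
    Finset.sum_nonneg fun i _ => mul_nonneg (sq_nonneg _) (hl i)
  have hB : ∀ k, 0 ≤ ∑ j, ‖⟪f j, g k⟫_𝕜‖ ^ 2 * m j := fun k =>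
    Finset.sum_nonneg fun j _ => mul_nonneg (sq_nonneg _) (hm j)
  have compression := sum_rpow_mul_norm_sq_le_of_compression (r := p - 2)
    ⟨by linarith, by linarith⟩
    (fun x : ι × κ => add_nonneg (mul_nonneg ha (hl x.1)) (mul_nonneg hb (hm x.2)))
    (conjTranspose_overlapMatrix_mul_self e f g)
    (conjTranspose_overlapMatrix_mul_diagonal_add_mul e f g (fun i => a * l i) fun j => b * m j)
    (fun k => (s k : 𝕜))
  simp only [overlapMatrix_mulVec e f hT, Fintype.sum_prod_type, RCLike.norm_ofReal, sq_abs,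
    mul_left_comm _ a, mul_left_comm _ b, ← Finset.mul_sum] at compression
  refine compression.trans (sum_rpow_mul_le_of_sum_rpow_le hp hM hY
    (fun k => add_nonneg (mul_nonneg ha (hA k)) (mul_nonneg hb (hB k))) (fun _ => sq_nonneg _)
    (sum_convex_combination_rpow_le hp1 hA hB ha hb hab
      ((sum_overlap_rpow_le hp1 hl).trans hlM) ((sum_overlap_rpow_le hp1 hm).trans hmM)) ?_)
  simpa only [sq_rpow_half] using hsY

lemma sum_abs_rpow_mul_norm_inner_sq_le (hT : IsDiagonalizedBy T g s) (hp : 2 < p)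
    (hM : 0 ≤ M) (hY : 0 ≤ Y) (ha : 0 ≤ a) (hb : 0 ≤ b) (hab : a + b = 1)
    (hlM : ∑ i, |l i| ^ p ≤ M ^ p) (hmM : ∑ j, |m j| ^ p ≤ M ^ p)
    (hsY : ∑ k, |s k| ^ p ≤ Y ^ p) :
    ∑ i, ∑ j, |a * l i + b * m j| ^ (p - 2) * ‖⟪e i, T (f j)⟫_𝕜‖ ^ 2 ≤ M ^ (p - 2) * Y ^ 2 := by
  calc ∑ i, ∑ j, |a * l i + b * m j| ^ (p - 2) * ‖⟪e i, T (f j)⟫_𝕜‖ ^ 2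
      ≤ ∑ i, ∑ j, (a * |l i| + b * |m j|) ^ (p - 2) * ‖⟪e i, T (f j)⟫_𝕜‖ ^ 2 := by
        gcongr with i _ j
        refine (abs_add_le _ _).trans_eq ?_
        rw [abs_mul, abs_mul, abs_of_nonneg ha, abs_of_nonneg hb]
    _ ≤ M ^ (p - 2) * Y ^ 2 := by
        rcases le_total 3 p with h | h
        · exact sum_rpow_mul_norm_inner_sq_le_of_three_le hT h hM hY (fun _ => abs_nonneg _)
            (fun _ => abs_nonneg _) ha hb hab hlM hmM hsY
        · exact sum_rpow_mul_norm_inner_sq_le_of_le_three hT hp h hM hY (fun _ => abs_nonneg _)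
            (fun _ => abs_nonneg _) ha hb hab hlM hmM hsY

end KeyInequality

section SchattenNorm

variable [FiniteDimensional 𝕜 E] {T S : E →ₗ[𝕜] E} {p : ℝ}

/-- The Schatten `p`-norm of a symmetric operator on a finite-dimensional inner product space, the
`ℓᵖ` norm of its eigenvalues. It is `0` by convention on operators that are not symmetric. -/
noncomputable def schattenNorm (p : ℝ) (T : E →ₗ[𝕜] E) : ℝ :=
  open Classical in
  if hT : T.IsSymmetric then (∑ i, |hT.eigenvalues rfl i| ^ p) ^ (1 / p) else 0

lemma isDiagonalizedBy_eigenvectorBasis (hT : T.IsSymmetric) :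
    IsDiagonalizedBy T (hT.eigenvectorBasis rfl) (hT.eigenvalues rfl) :=
  hT.apply_eigenvectorBasis rfl

lemma schattenNorm_nonneg (p : ℝ) (T : E →ₗ[𝕜] E) : 0 ≤ schattenNorm p T := by
  unfold schattenNorm
  split_ifs <;> positivity

lemma IsDiagonalizedBy.schattenNorm_eq {e : OrthonormalBasis ι 𝕜 E} {l : ι → ℝ}
    (h : IsDiagonalizedBy T e l) (hp : 1 ≤ p) :
    schattenNorm p T = (∑ i, |l i| ^ p) ^ (1 / p) := by
  rw [schattenNorm, dif_pos h.isSymmetric,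
    h.sum_abs_rpow_eq (isDiagonalizedBy_eigenvectorBasis h.isSymmetric) hp]

lemma IsDiagonalizedBy.schattenNorm_rpow {e : OrthonormalBasis ι 𝕜 E} {l : ι → ℝ}
    (h : IsDiagonalizedBy T e l) (hp : 1 ≤ p) : schattenNorm p T ^ p = ∑ i, |l i| ^ p := by
  rw [h.schattenNorm_eq hp, ← Real.rpow_mul (by positivity), one_div_mul_cancel (by linarith),
    Real.rpow_one]

lemma sum_abs_re_inner_rpow_le_schattenNorm (hT : T.IsSymmetric) (hp : 1 ≤ p)
    (f : OrthonormalBasis κ 𝕜 E) :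
    (∑ k, |RCLike.re ⟪f k, T (f k)⟫_𝕜| ^ p) ^ (1 / p) ≤ schattenNorm p T := by
  have h := isDiagonalizedBy_eigenvectorBasis hT
  rw [h.schattenNorm_eq hp]
  gcongr
  exact h.sum_abs_re_inner_rpow_le f hp

lemma schattenNorm_add_le (hT : T.IsSymmetric) (hS : S.IsSymmetric) (hp : 1 ≤ p) :
    schattenNorm p (T + S) ≤ schattenNorm p T + schattenNorm p S := by
  have h := isDiagonalizedBy_eigenvectorBasis (hT.add hS)
  set g := (hT.add hS).eigenvectorBasis rfl
  calc schattenNorm p (T + S)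
      = (∑ k, |RCLike.re ⟪g k, T (g k)⟫_𝕜 + RCLike.re ⟪g k, S (g k)⟫_𝕜| ^ p) ^ (1 / p) := by
        rw [h.schattenNorm_eq hp]
        simp only [← h.re_inner_basis, LinearMap.add_apply, inner_add_right, map_add]
    _ ≤ (∑ k, |RCLike.re ⟪g k, T (g k)⟫_𝕜| ^ p) ^ (1 / p)
          + (∑ k, |RCLike.re ⟪g k, S (g k)⟫_𝕜| ^ p) ^ (1 / p) := Real.Lp_add_le _ _ _ hp
    _ ≤ schattenNorm p T + schattenNorm p S :=
        add_le_add (sum_abs_re_inner_rpow_le_schattenNorm hT hp g)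
          (sum_abs_re_inner_rpow_le_schattenNorm hS hp g)

lemma schattenNorm_ofReal_smul (hT : T.IsSymmetric) (hp : 1 ≤ p) (t : ℝ) :
    schattenNorm p ((t : 𝕜) • T) = |t| * schattenNorm p T := by
  have h := isDiagonalizedBy_eigenvectorBasis hT
  have hp0 : p ≠ 0 := by linarith
  rw [(h.smul t).schattenNorm_eq hp, h.schattenNorm_eq hp]
  simp only [abs_mul, Real.mul_rpow (abs_nonneg _) (abs_nonneg _), ← Finset.mul_sum]
  rw [Real.mul_rpow (by positivity) (by positivity), ← Real.rpow_mul (abs_nonneg t),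
    mul_one_div_cancel hp0, Real.rpow_one]

end SchattenNorm

section BallCarlenLieb

namespace IsDiagonalizedBy

variable {A D : E →ₗ[𝕜] E}
variable {e : OrthonormalBasis ι 𝕜 E} {l : ι → ℝ} {f : OrthonormalBasis κ 𝕜 E} {m : κ → ℝ}

lemma inner_apply_basis_of_add (he : IsDiagonalizedBy A e l) (hf : IsDiagonalizedBy (A + D) f m)
    (i : ι) (j : κ) : ⟪e i, D (f j)⟫_𝕜 = (m j - l i : ℝ) * ⟪e i, f j⟫_𝕜 := by
  have hD : D (f j) = (A + D) (f j) - A (f j) := by rw [LinearMap.add_apply, add_sub_cancel_left]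
  rw [hD, hf j, inner_sub_right, inner_smul_right, he.inner_apply, RCLike.ofReal_sub, sub_mul]

lemma sum_norm_inner_sq_mul_sub (he : IsDiagonalizedBy A e l) (hf : IsDiagonalizedBy (A + D) f m)
    (i : ι) : ∑ j, ‖⟪e i, f j⟫_𝕜‖ ^ 2 * (m j - l i) = RCLike.re ⟪e i, D (e i)⟫_𝕜 := by
  have hsum := hf.re_inner_self_apply (e i)
  simp only [norm_inner_symm (f _), LinearMap.add_apply, inner_add_right, map_add,
    he.re_inner_basis] at hsum
  simp only [mul_sub, Finset.sum_sub_distrib, ← Finset.sum_mul, sum_norm_inner_sq_right e f]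
  linarith

variable {p : ℝ}

/- Second-order Taylor expansion of `Tr |·| ^ p`; every point of the segment is evaluated on the
pairs of eigenvalues of the two endpoints, weighted by the overlaps of their eigenbases. -/
lemma sum_abs_rpow_le_expansion {M Y : ℝ} (he : IsDiagonalizedBy A e l)
    (hf : IsDiagonalizedBy (A + D) f m) {g : OrthonormalBasis σ 𝕜 E}
    {s : σ → ℝ} (hD : IsDiagonalizedBy D g s) (hp : 2 < p) (hM : 0 ≤ M) (hY : 0 ≤ Y)
    (hlM : ∑ i, |l i| ^ p ≤ M ^ p) (hmM : ∑ j, |m j| ^ p ≤ M ^ p)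
    (hsY : ∑ k, |s k| ^ p ≤ Y ^ p) :
    ∑ j, |m j| ^ p ≤ ∑ i, |l i| ^ p
      + p * ∑ i, |l i| ^ (p - 2) * l i * RCLike.re ⟪e i, D (e i)⟫_𝕜
      + p * (p - 1) / 2 * (M ^ (p - 2) * Y ^ 2) := by
  have hsecond : ∀ t ∈ Set.Icc (0 : ℝ) 1, ∑ x : ι × κ, ‖⟪e x.1, f x.2⟫_𝕜‖ ^ 2
      * (|l x.1 + t * (m x.2 - l x.1)| ^ (p - 2) * (m x.2 - l x.1) ^ 2)
      ≤ M ^ (p - 2) * Y ^ 2 := fun t ht => by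
    refine le_of_eq_of_le ?_ (sum_abs_rpow_mul_norm_inner_sq_le (e := e) (f := f) (a := 1 - t)
      (b := t) hD hp hM hY (by linarith [ht.2]) ht.1 (by ring) hlM hmM hsY)
    rw [Fintype.sum_prod_type]
    refine Finset.sum_congr rfl fun i _ => Finset.sum_congr rfl fun j _ => ?_
    rw [he.inner_apply_basis_of_add hf, norm_mul, RCLike.norm_ofReal, mul_pow, sq_abs,
      show (1 - t) * l i + t * m j = l i + t * (m j - l i) by ring]
    ring
  have htaylor := sum_mul_abs_add_rpow_le hp hsecond
  have hzeroth : ∑ i, ∑ j, ‖⟪e i, f j⟫_𝕜‖ ^ 2 * |l i| ^ p = ∑ i, |l i| ^ p := by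
    simp only [← Finset.sum_mul, sum_norm_inner_sq_right e f, one_mul]
  have hendpoint : ∑ i, ∑ j, ‖⟪e i, f j⟫_𝕜‖ ^ 2 * |m j| ^ p = ∑ j, |m j| ^ p := by
    rw [Finset.sum_comm]
    simp only [← Finset.sum_mul, sum_norm_inner_sq_left e f, one_mul]
  simpa only [Fintype.sum_prod_type, add_sub_cancel, mul_left_comm (‖_‖ ^ 2), ← Finset.mul_sum,
    he.sum_norm_inner_sq_mul_sub hf, hzeroth, hendpoint] using htaylor

end IsDiagonalizedBy

variable [FiniteDimensional 𝕜 E] {p : ℝ}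

lemma schattenNorm_add_rpow_le_expansion {A D : E →ₗ[𝕜] E}
    {e : OrthonormalBasis ι 𝕜 E} {l : ι → ℝ} (he : IsDiagonalizedBy A e l) (hD : D.IsSymmetric)
    (hp : 2 < p) :
    schattenNorm p (A + D) ^ p ≤ schattenNorm p A ^ p
      + p * ∑ i, |l i| ^ (p - 2) * l i * RCLike.re ⟪e i, D (e i)⟫_𝕜
      + p * (p - 1) / 2 * (max (schattenNorm p A) (schattenNorm p (A + D)) ^ (p - 2)
        * schattenNorm p D ^ 2) := by
  have hf := isDiagonalizedBy_eigenvectorBasis (he.isSymmetric.add hD)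
  have hg := isDiagonalizedBy_eigenvectorBasis hD
  have hp1 : 1 ≤ p := by linarith
  have hp0 : 0 ≤ p := by linarith
  have hA := schattenNorm_nonneg p A
  have hAD := schattenNorm_nonneg p (A + D)
  have hM := le_max_of_le_left hA (c := schattenNorm p (A + D))
  rw [hf.schattenNorm_rpow hp1, he.schattenNorm_rpow hp1]
  refine he.sum_abs_rpow_le_expansion hf hg hp hM (schattenNorm_nonneg p D) ?_ ?_
    (hg.schattenNorm_rpow hp1).ge
  · rw [← he.schattenNorm_rpow hp1]
    exact Real.rpow_le_rpow hA (le_max_left _ _) hp0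
  · rw [← hf.schattenNorm_rpow hp1]
    exact Real.rpow_le_rpow hAD (le_max_right _ _) hp0

lemma exists_schattenNorm_add_smul_rpow_le {x y : E →ₗ[𝕜] E} (hx : x.IsSymmetric)
    (hy : y.IsSymmetric) (hp : 2 < p) :
    ∃ P, ∀ h : ℝ, schattenNorm p (x + (h : 𝕜) • y) ^ p ≤ schattenNorm p x ^ p + h * P
      + p * (p - 1) / 2 * (h ^ 2 * (max (schattenNorm p x) (schattenNorm p (x + (h : 𝕜) • y))
        ^ (p - 2) * schattenNorm p y ^ 2)) := by
  have he := isDiagonalizedBy_eigenvectorBasis hx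
  set e := hx.eigenvectorBasis rfl
  set l := hx.eigenvalues rfl
  refine ⟨p * ∑ i, |l i| ^ (p - 2) * l i * RCLike.re ⟪e i, y (e i)⟫_𝕜, fun h => ?_⟩
  have hexp := schattenNorm_add_rpow_le_expansion he (hy.smul (RCLike.conj_ofReal h)) hp
  rw [schattenNorm_ofReal_smul hy (by linarith), mul_pow, sq_abs] at hexp
  simpa only [LinearMap.smul_apply, inner_smul_right, RCLike.re_ofReal_mul, mul_left_comm _ h,
    mul_left_comm _ (h ^ 2), ← Finset.mul_sum] using hexp

theorem bcl_matrix_gt_two_general (hp : 2 < p) {x y : E →ₗ[𝕜] E} (hx : x.IsSymmetric)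
    (hy : y.IsSymmetric) :
    schattenNorm p (x + y) ^ 2 + schattenNorm p (x - y) ^ 2
      ≤ 2 * schattenNorm p x ^ 2 + 2 * (p - 1) * schattenNorm p y ^ 2 := by
  have hp1 : 1 ≤ p := by linarith
  have hsmul : ∀ t : ℝ, ((t : 𝕜) • y).IsSymmetric := fun t => hy.smul (RCLike.conj_ofReal t)
  have hline : ∀ t : ℝ, (x + (t : 𝕜) • y).IsSymmetric := fun t => hx.add (hsmul t)
  have hstep : ∀ t t₀ : ℝ, x + (t : 𝕜) • y = (x + (t₀ : 𝕜) • y) + ((t - t₀ : ℝ) : 𝕜) • y :=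
    fun t t₀ => by rw [add_assoc, ← add_smul, ← RCLike.ofReal_add, add_sub_cancel]
  have hbcl := sq_add_sq_le_of_rpow_le_expansion (N := fun t => schattenNorm p (x + (t : 𝕜) • y))
    hp.le (fun t => schattenNorm_nonneg p _) (schattenNorm_nonneg p y)
    (fun t t₀ => ?_) (fun t₀ => ?_)
  · simpa only [RCLike.ofReal_one, RCLike.ofReal_neg, RCLike.ofReal_zero, one_smul, zero_smul,
      neg_smul, add_zero, ← sub_eq_add_neg] using hbcl
  · have := schattenNorm_add_le (hline t₀) (hsmul (t - t₀)) hp1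
    rwa [← hstep, schattenNorm_ofReal_smul hy hp1, mul_comm |_|] at this
  · obtain ⟨P, hP⟩ := exists_schattenNorm_add_smul_rpow_le (hline t₀) hy hp
    exact ⟨P, fun t => by simpa only [← hstep] using hP (t - t₀)⟩

lemma hermitianSchattenNorm_eq_schattenNorm {n : ℕ} (hp : 1 ≤ p) {a : Matrix (Fin n) (Fin n) ℂ}
    (ha : a.IsHermitian) : hermitianSchattenNorm p a = schattenNorm p a.toEuclideanLin := by
  have hdiag : IsDiagonalizedBy a.toEuclideanLin ha.eigenvectorBasis ha.eigenvalues := fun i => by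
    ext j
    simpa [Matrix.toLpLin_apply] using congrFun (ha.mulVec_eigenvectorBasis i) j
  rw [hermitianSchattenNorm, dif_pos ha, hdiag.schattenNorm_eq hp]

end BallCarlenLieb

end Operators

/-- Reversed **Ball–Carlen–Lieb convexity inequality** for Hermitian matrices, `2 < p < ∞`:
`‖x+y‖_p² + ‖x−y‖_p² ≤ 2‖x‖_p² + 2(p−1)‖y‖_p²`. -/
theorem bcl_matrix_gt_two {n : ℕ} (hn : 1 ≤ n) (p : ℝ) (hp : 2 < p)
    (x y : Matrix (Fin n) (Fin n) ℂ) (hx : x.IsHermitian) (hy : y.IsHermitian) :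
    hermitianSchattenNorm p (x + y) ^ 2 + hermitianSchattenNorm p (x - y) ^ 2
    ≤ 2 * hermitianSchattenNorm p x ^ 2 + 2 * (p - 1) * hermitianSchattenNorm p y ^ 2 := by
  have hp1 : 1 ≤ p := by linarith
  rw [hermitianSchattenNorm_eq_schattenNorm hp1 (hx.add hy),
    hermitianSchattenNorm_eq_schattenNorm hp1 (hx.sub hy),
    hermitianSchattenNorm_eq_schattenNorm hp1 hx, hermitianSchattenNorm_eq_schattenNorm hp1 hy,
    map_add, map_sub]
  exact bcl_matrix_gt_two_general hp (Matrix.isSymmetric_toEuclideanLin_iff.mpr hx)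
    (Matrix.isSymmetric_toEuclideanLin_iff.mpr hy)
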